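/- arXiv:1711.04649 — 2 statements merged into one kernel-verified Lean document; each statement's English description precedes it below -/
import Mathlib

section
/- Let φ be an endomorphism of ℙ¹ defined over a number field K with good reduction at a nonzero prime 𝔭 of K. Let P₀ ∈ ℙ¹(K) be a fixed point of φ. Let a, b be integers with 0 < a < b, and let P_b, P_a ∈ ℙ¹(K) be points such that φ^b(P_b) = φ^a(P_a) = P₀ and φ^{b−a}(P_b) = P_a. Then δ_𝔭(P_b, P_a) = δ_𝔭(P_b, P₀) ≤ δ_𝔭(P_a, P₀). -/
open NumberField IsDedekindDomain MvPolynomial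
open scoped Classical nonZeroDivisors

set_option synthInstance.maxHeartbeats 1000000
set_option maxHeartbeats 1000000

noncomputable section

/-- The projective line over `K`. -/
abbrev P1 (K : Type*) [Field K] := Projectivization K (Fin 2 → K)

variable {K : Type*} [Field K] [NumberField K]

/-- The additive `v`-adic valuation (order) of `x ∈ K`, with junk value `0` at `x = 0`,
normalized so that it is surjective onto `ℤ`. -/
def ordAt (v : HeightOneSpectrum (𝓞 K)) (x : K) : ℤ :=
  if hx : x = 0 then 0
  else - Multiplicative.toAdd (WithZero.unzero ((v.valuation K).ne_zero_iff.mpr hx))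

/-- `min (v(x), v(y))` for a pair of coordinates, not both zero. -/
def minOrd (v : HeightOneSpectrum (𝓞 K)) (x y : K) : ℤ :=
  if x = 0 then ordAt v y else if y = 0 then ordAt v x else min (ordAt v x) (ordAt v y)

/-- The `v`-adic logarithmic distance between two points of `ℙ¹(K)`:
`δ_v(P,Q) = v(x₁y₂ - x₂y₁) - min(v x₁, v y₁) - min(v x₂, v y₂)`, with value `⊤` when `P = Q`
(it is independent of the choice of homogeneous coordinates, so we compute it on the chosen
representatives). -/
def logDist (v : HeightOneSpectrum (𝓞 K)) (P Q : P1 K) : WithTop ℤ :=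
  if P = Q then ⊤
  else ((ordAt v (P.rep 0 * Q.rep 1 - P.rep 1 * Q.rep 0)
        - minOrd v (P.rep 0) (P.rep 1) - minOrd v (Q.rep 0) (Q.rep 1) : ℤ) : WithTop ℤ)

/-- An endomorphism of `ℙ¹` of degree `d` defined over `K`, given by a pair of homogeneous
forms of degree `d` with no common zero over the algebraic closure, together with the induced
self-map of `ℙ¹(K)`. -/
structure P1Map (K : Type*) [Field K] (d : ℕ) where
  toFun : P1 K → P1 K
  F : MvPolynomial (Fin 2) K
  G : MvPolynomial (Fin 2) K
  homF : F.IsHomogeneous d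
  homG : G.IsHomogeneous d
  coprime : ∀ x y : AlgebraicClosure K,
    aeval ![x, y] F = 0 → aeval ![x, y] G = 0 → x = 0 ∧ y = 0
  compat : ∀ (x y : K) (hxy : ![x, y] ≠ 0)
    (h : ![eval ![x, y] F, eval ![x, y] G] ≠ 0),
    toFun (Projectivization.mk K ![x, y] hxy) =
      Projectivization.mk K ![eval ![x, y] F, eval ![x, y] G] h

variable {d : ℕ}

/-- `φ` has good reduction at the finite place `v`: some representing pair of forms has
coefficients in the valuation ring at `v`, not all in the maximal ideal, and the reductions
of the two forms modulo `v` have no common zero in `ℙ¹` of the algebraic closure of the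
residue field. -/
def GoodReductionAt (φ : P1Map K d) (v : HeightOneSpectrum (𝓞 K)) : Prop :=
  ∃ c : K, c ≠ 0 ∧
    ∃ F₀ G₀ : MvPolynomial (Fin 2) (v.valuation (K := K)).valuationSubring,
      MvPolynomial.map ((v.valuation (K := K)).valuationSubring.subtype) F₀ = C c * φ.F ∧
      MvPolynomial.map ((v.valuation (K := K)).valuationSubring.subtype) G₀ = C c * φ.G ∧
      ((∃ m, F₀.coeff m ∉ IsLocalRing.maximalIdeal (v.valuation (K := K)).valuationSubring) ∨
        (∃ m, G₀.coeff m ∉ IsLocalRing.maximalIdeal (v.valuation (K := K)).valuationSubring)) ∧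
      ∀ x y : AlgebraicClosure
          (IsLocalRing.ResidueField (v.valuation (K := K)).valuationSubring),
        eval ![x, y] (MvPolynomial.map
          ((algebraMap (IsLocalRing.ResidueField (v.valuation (K := K)).valuationSubring)
              (AlgebraicClosure _)).comp
            (IsLocalRing.residue _)) F₀) = 0 →
        eval ![x, y] (MvPolynomial.map
          ((algebraMap (IsLocalRing.ResidueField (v.valuation (K := K)).valuationSubring)
              (AlgebraicClosure _)).comp
            (IsLocalRing.residue _)) G₀) = 0 →
        x = 0 ∧ y = 0

/-- `φ` has good reduction outside `S`, where `S` consists of all archimedean places together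
with the finite places in `T`. -/
def GoodReductionOutside (φ : P1Map K d) (T : Finset (HeightOneSpectrum (𝓞 K))) : Prop :=
  ∀ v ∉ T, GoodReductionAt φ v

/-- `P` is a periodic point of `φ`. -/
def IsPeriodicPoint (φ : P1Map K d) (P : P1 K) : Prop :=
  ∃ n, 0 < n ∧ φ.toFun^[n] P = P

/-- `P` is a preperiodic point of `φ`. -/
def IsPreperiodicPoint (φ : P1Map K d) (P : P1 K) : Prop :=
  ∃ m, IsPeriodicPoint φ (φ.toFun^[m] P)

/-- `P` is a tail point of `φ`: preperiodic but not periodic. -/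
def IsTailPoint (φ : P1Map K d) (P : P1 K) : Prop :=
  IsPreperiodicPoint φ P ∧ ¬ IsPeriodicPoint φ P

/-- The set `Tail(φ,K,P)` of `K`-rational tail points of `P`: non-periodic points having `P`
in their forward orbit. -/
def TailOf (φ : P1Map K d) (P : P1 K) : Set (P1 K) :=
  {Q | ¬ IsPeriodicPoint φ Q ∧ ∃ n, φ.toFun^[n] Q = P}

/-- `P = [a:b]` is a critical point of `φ = [F:G]`: the algebraic condition
`φ([x:y]) = φ([a:b])`, i.e. the form `G(a,b)·F(X,Y) - F(a,b)·G(X,Y)`, vanishes to order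
at least `2` at `[a:b]`. -/
def IsCriticalPt (φ : P1Map K d) (P : P1 K) : Prop :=
  ∃ (a b : K) (hab : ![a, b] ≠ 0), P = Projectivization.mk K ![a, b] hab ∧
    (C b * X 0 - C a * X 1) ^ 2 ∣
      (C (eval ![a, b] φ.G) * φ.F - C (eval ![a, b] φ.F) * φ.G)

/-- `P` belongs to a critical cycle of `φ`: it lies in the orbit of a critical periodic
point. -/
def InCriticalCycle (φ : P1Map K d) (P : P1 K) : Prop :=
  ∃ Q, IsCriticalPt φ Q ∧ IsPeriodicPoint φ Q ∧ ∃ n, φ.toFun^[n] Q = P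

/-- The cardinality `|S|` of the set of places `S` consisting of all archimedean places
together with the finite places in `T`. -/
def sCard (K : Type*) [Field K] [NumberField K] (T : Finset (HeightOneSpectrum (𝓞 K))) : ℕ :=
  T.card + Fintype.card (InfinitePlace K)

/-- `B(s) = 2^{16 s}`. -/
def Bconst (s : ℕ) : ℕ := 2 ^ (16 * s)

/-- `C(n,s) = e^{(6n)^{3n} (n s + 1 - n)}`. -/
def Cconst (n s : ℕ) : ℝ := Real.exp ((6 * n : ℝ) ^ (3 * n) * (n * s + 1 - n))

/-- `CV(d,s) = (3B(s)+13)d + 27B(s) + C(5,s) + 6C(3,s) + 32`. -/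
def CVconst (d s : ℕ) : ℝ :=
  (3 * (Bconst s : ℝ) + 13) * d + 27 * (Bconst s : ℝ) + Cconst 5 s + 6 * Cconst 3 s + 32

/-- `L₁(d,s) = (d-1)(1 + d(1 + B(s)))`. -/
def L1const (d s : ℕ) : ℕ := (d - 1) * (1 + d * (1 + Bconst s))

/-- `L₂(d,s) = max{(2(C(3,s)+2)+1)d + 1, (d-1)(1 + B(s)(B(s) + C(3,s) + 3))}`. -/
def L2const (d s : ℕ) : ℝ :=
  max ((2 * (Cconst 3 s + 2) + 1) * d + 1)
    (((d : ℝ) - 1) * (1 + (Bconst s : ℝ) * ((Bconst s : ℝ) + Cconst 3 s + 3)))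

/-- `L₃(d,s) = ((1 + 3B(s))B(s) + 1)(d-1)`. -/
def L3const (d s : ℕ) : ℕ := ((1 + 3 * Bconst s) * Bconst s + 1) * (d - 1)

/-- `L₄(d,s) = (C(3,s) + 3)(d-1)`. -/
def L4const (d s : ℕ) : ℝ := (Cconst 3 s + 3) * ((d : ℝ) - 1)

end

lemma aux_eval_smul {R : Type*} [CommRing R] {d : ℕ} {F : MvPolynomial (Fin 2) R}
    (hF : F.IsHomogeneous d) (l x y : R) :
    eval ![l * x, l * y] F = l ^ d * eval ![x, y] F := by
  rw [eval_eq', eval_eq', Finset.mul_sum]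
  refine Finset.sum_congr rfl fun m hm => ?_
  have h := hF (mem_support_iff.mp hm)
  have h' : Finsupp.weight (1 : Fin 2 → ℕ) m = m 0 + m 1 := by
    rw [Finsupp.weight_apply, Finsupp.sum_fintype _ _ (by simp)]
    simp
  rw [h'] at h
  simp only [Fin.prod_univ_two, Matrix.cons_val_zero, Matrix.cons_val_one]
  rw [← h]
  ring

lemma aux_map_eval {R S : Type*} [CommRing R] [CommRing S] (f : R →+* S)
    (F : MvPolynomial (Fin 2) R) (x y : R) :
    f (eval ![x, y] F) = eval ![f x, f y] (MvPolynomial.map f F) := by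
  rw [MvPolynomial.eval_map, MvPolynomial.eval, coe_eval₂Hom, eval₂_comp_left]
  congr 1
  funext i
  fin_cases i <;> rfl

lemma aux_core {R : Type*} [CommRing R] {d : ℕ} {F G : MvPolynomial (Fin 2) R}
    (hF : F.IsHomogeneous d) (hG : G.IsHomogeneous d) (p0 p1 q0 q1 : R)
    (hp : IsUnit p0 ∨ IsUnit p1) :
    p0 * q1 - p1 * q0 ∣
      eval ![p0, p1] F * eval ![q0, q1] G - eval ![p0, p1] G * eval ![q0, q1] F := by
  set D := p0 * q1 - p1 * q0 with hD
  rw [← Ideal.mem_span_singleton, ← Ideal.Quotient.eq_zero_iff_mem]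
  set f := Ideal.Quotient.mk (Ideal.span {D}) with hf
  have h0 : f p0 * f q1 = f p1 * f q0 := by
    have : f D = 0 := Ideal.Quotient.eq_zero_iff_mem.mpr (Ideal.mem_span_singleton_self D)
    have e : f D = f p0 * f q1 - f p1 * f q0 := by
      simp only [← map_mul, ← map_sub]
      rfl
    exact sub_eq_zero.mp (e.symm.trans this)
  obtain ⟨l, hl0, hl1⟩ : ∃ l, f q0 = l * f p0 ∧ f q1 = l * f p1 := by
    rcases hp with hp | hp
    · obtain ⟨u, hu⟩ := hp.exists_right_inv
      have hu' : f p0 * f u = 1 := by rw [← map_mul, hu, map_one]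
      refine ⟨f q0 * f u, ?_, ?_⟩
      · linear_combination (-f q0) * hu'
      · linear_combination (-f q1) * hu' + f u * h0
    · obtain ⟨u, hu⟩ := hp.exists_right_inv
      have hu' : f p1 * f u = 1 := by rw [← map_mul, hu, map_one]
      refine ⟨f q1 * f u, ?_, ?_⟩
      · linear_combination (-f q0) * hu' - f u * h0
      · linear_combination (-f q1) * hu'
  rw [map_sub, map_mul, map_mul, aux_map_eval, aux_map_eval, aux_map_eval, aux_map_eval, hl0, hl1,
    aux_eval_smul (hF.map f), aux_eval_smul (hG.map f)]
  ring

section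
variable {K : Type*} [Field K] {Γ : Type*} [LinearOrderedCommGroupWithZero Γ] (V : Valuation K Γ)

def auxN (p : Fin 2 → K) : Γ := max (V (p 0)) (V (p 1))

def auxDt (p q : Fin 2 → K) : K := p 0 * q 1 - p 1 * q 0

noncomputable def auxW (P Q : P1 K) : Γ := V (auxDt P.rep Q.rep) / (auxN V P.rep * auxN V Q.rep)

lemma auxN_ne {p : Fin 2 → K} (hp : p ≠ 0) : auxN V p ≠ 0 := by
  intro h
  apply hp
  have h0 : V (p 0) ≤ 0 := h ▸ le_max_left _ _
  have h1 : V (p 1) ≤ 0 := h ▸ le_max_right _ _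
  rw [le_zero_iff, map_eq_zero] at h0 h1
  funext i
  fin_cases i
  · exact h0
  · exact h1

lemma auxN_smul (c : K) (p : Fin 2 → K) : auxN V (c • p) = V c * auxN V p := by
  simp only [auxN, Pi.smul_apply, smul_eq_mul, map_mul]
  rcases le_total (V (p 0)) (V (p 1)) with h | h
  · rw [max_eq_right h, max_eq_right (mul_le_mul_right h _)]
  · rw [max_eq_left h, max_eq_left (mul_le_mul_right h _)]

lemma auxW_mk (p q : Fin 2 → K) (hp : p ≠ 0) (hq : q ≠ 0) :
    auxW V (Projectivization.mk K p hp) (Projectivization.mk K q hq)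
      = V (auxDt p q) / (auxN V p * auxN V q) := by
  obtain ⟨a, ha⟩ := Projectivization.exists_smul_eq_mk_rep K p hp
  obtain ⟨b, hb⟩ := Projectivization.exists_smul_eq_mk_rep K q hq
  rw [auxW, ← ha, ← hb]
  have e : auxDt (a • p) (b • q) = ((a : K) * b) * auxDt p q := by
    simp only [auxDt, Pi.smul_apply, Units.smul_def, smul_eq_mul]; ring
  rw [e, Units.smul_def, Units.smul_def, auxN_smul, auxN_smul, map_mul, map_mul]
  have h1 : V (a : K) ≠ 0 := by simp
  have h2 : V (b : K) ≠ 0 := by simp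
  have h3 := auxN_ne V hp
  have h4 := auxN_ne V hq
  rw [mul_mul_mul_comm, mul_div_mul_left _ _ (mul_ne_zero h1 h2)]

lemma auxDt_ne {P Q : P1 K} (h : P ≠ Q) : auxDt P.rep Q.rep ≠ 0 := by
  intro h0
  apply h
  rw [← P.mk_rep, ← Q.mk_rep, Projectivization.mk_eq_mk_iff']
  rw [auxDt, sub_eq_zero] at h0
  have hq := Q.rep_nonzero
  by_cases h1 : Q.rep 0 = 0
  · have h2 : Q.rep 1 ≠ 0 := by
      intro h2
      apply hq; funext i; fin_cases i
      · exact h1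
      · exact h2
    refine ⟨P.rep 1 / Q.rep 1, ?_⟩
    funext i; fin_cases i
    · have : P.rep 0 = 0 := by simpa [h1, h2] using h0
      simp [h1, this]
    · simp [h2]
  · refine ⟨P.rep 0 / Q.rep 0, ?_⟩
    funext i; fin_cases i
    · simp [h1]
    · simp only [Fin.mk_one, Pi.smul_apply, smul_eq_mul]
      field_simp
      rw [h0, mul_comm]

lemma auxW_self (P : P1 K) : auxW V P P = 0 := by
  have : auxDt P.rep P.rep = 0 := by simp only [auxDt]; ring
  simp [auxW, this]

lemma auxW_ne {P Q : P1 K} (h : P ≠ Q) : auxW V P Q ≠ 0 :=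
  div_ne_zero (by simpa using auxDt_ne h)
    (mul_ne_zero (auxN_ne V P.rep_nonzero) (auxN_ne V Q.rep_nonzero))

lemma auxW_comm (P Q : P1 K) : auxW V P Q = auxW V Q P := by
  rw [auxW, auxW, mul_comm (auxN V P.rep)]
  congr 1
  rw [← Valuation.map_neg]
  congr 1
  simp only [auxDt]; ring

lemma auxW_ultra (P Q R : P1 K) : auxW V P R ≤ max (auxW V P Q) (auxW V Q R) := by
  have hp := auxN_ne V P.rep_nonzero
  have hq := auxN_ne V Q.rep_nonzero
  have hr := auxN_ne V R.rep_nonzero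
  simp only [auxW]
  generalize P.rep = p at *
  generalize Q.rep = q at *
  generalize R.rep = r at *
  have key : ∀ i : Fin 2, V (q i) * V (auxDt p r) ≤
      max (auxN V p * V (auxDt q r)) (auxN V r * V (auxDt p q)) := by
    intro i
    have e : q i * auxDt p r = p i * auxDt q r + r i * auxDt p q := by
      fin_cases i <;> simp only [auxDt, Fin.zero_eta, Fin.mk_one] <;> ring
    have hN : ∀ s : Fin 2 → K, V (s i) ≤ auxN V s := by
      intro s; fin_cases i
      · exact le_max_left _ _
      · exact le_max_right _ _
    rw [← map_mul, e]
    refine (V.map_add _ _).trans ?_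
    rw [map_mul, map_mul]
    exact max_le_max (mul_le_mul_left (hN p) _) (mul_le_mul_left (hN r) _)
  have key2 : auxN V q * V (auxDt p r) ≤
      max (auxN V p * V (auxDt q r)) (auxN V r * V (auxDt p q)) := by
    have : auxN V q = V (q 0) ∨ auxN V q = V (q 1) := max_choice _ _
    rcases this with h | h
    · rw [h]; exact key 0
    · rw [h]; exact key 1
  have pos : 0 < auxN V p * auxN V q * auxN V r := zero_lt_iff.mpr (by simp [hp, hq, hr])
  have e1 : V (auxDt p r) / (auxN V p * auxN V r) =
      (auxN V q * V (auxDt p r)) / (auxN V p * auxN V q * auxN V r) := by field_simp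
  have e2 : V (auxDt p q) / (auxN V p * auxN V q) =
      (auxN V r * V (auxDt p q)) / (auxN V p * auxN V q * auxN V r) := by field_simp
  have e3 : V (auxDt q r) / (auxN V q * auxN V r) =
      (auxN V p * V (auxDt q r)) / (auxN V p * auxN V q * auxN V r) := by field_simp
  rw [e1, e2, e3, max_comm]
  rcases le_max_iff.mp key2 with h | h
  · exact le_max_of_le_left (div_le_div_of_nonneg_right h zero_le)
  · exact le_max_of_le_right (div_le_div_of_nonneg_right h zero_le)

lemma aux_unit_val {x : V.valuationSubring} (h : IsUnit x) : V (x : K) = 1 := by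
  obtain ⟨y, hy⟩ := h.exists_right_inv
  have h1 : V (x : K) * V (y : K) = 1 := by
    rw [← map_mul]
    have := congrArg (fun z : V.valuationSubring => V (z : K)) hy
    simpa using this
  refine le_antisymm x.2 ?_
  rw [← h1]
  exact mul_le_of_le_one_right' y.2

lemma auxN_unit {x y : V.valuationSubring} (h : IsUnit x ∨ IsUnit y) :
    auxN V ![(x : K), (y : K)] = 1 := by
  have hx : V (x : K) ≤ 1 := x.2
  have hy : V (y : K) ≤ 1 := y.2
  simp only [auxN, Matrix.cons_val_zero, Matrix.cons_val_one]
  rcases h with h | h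
  · rw [aux_unit_val V h, max_eq_left hy]
  · rw [aux_unit_val V h, max_eq_right hx]

lemma aux_exists_norm (P : P1 K) : ∃ (x y : V.valuationSubring) (h : ![(x : K), (y : K)] ≠ 0),
    P = Projectivization.mk K ![(x : K), (y : K)] h ∧ (IsUnit x ∨ IsUnit y) := by
  induction P using Projectivization.ind with | h p hp =>
  rcases le_total (V (p 0)) (V (p 1)) with h | h
  · have h1 : p 1 ≠ 0 := by
      intro h1
      apply hp; funext i; fin_cases i
      · simpa [h1] using h
      · exact h1
    have hm : V (p 0 / p 1) ≤ 1 := by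
      rw [map_div₀]; exact div_le_one_of_le₀ h zero_le
    refine ⟨⟨p 0 / p 1, hm⟩, 1, by simp, ?_, Or.inr isUnit_one⟩
    rw [Projectivization.mk_eq_mk_iff']
    refine ⟨p 1, ?_⟩
    funext i; fin_cases i
    · simp; field_simp
    · simp
  · have h1 : p 0 ≠ 0 := by
      intro h1
      apply hp; funext i; fin_cases i
      · exact h1
      · simpa [h1] using h
    have hm : V (p 1 / p 0) ≤ 1 := by
      rw [map_div₀]; exact div_le_one_of_le₀ h zero_le
    refine ⟨1, ⟨p 1 / p 0, hm⟩, by simp, ?_, Or.inl isUnit_one⟩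
    rw [Projectivization.mk_eq_mk_iff']
    refine ⟨p 0, ?_⟩
    funext i; fin_cases i
    · simp
    · simp; field_simp

end

section
variable {K : Type*} [Field K] [NumberField K] (v : HeightOneSpectrum (𝓞 K))

lemma aux_ordAt (x : K) : ordAt v x = - WithZero.log (v.valuation K x) := by
  unfold ordAt
  split_ifs with h
  · simp [h]
  · rw [WithZero.toAdd_unzero_eq_log]

lemma aux_minOrd (p : Fin 2 → K) :
    minOrd v (p 0) (p 1) = - WithZero.log (auxN (v.valuation K) p) := by
  unfold minOrd auxN
  simp only [aux_ordAt]
  split_ifs with h h'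
  · simp [h]
  · simp [h']
  · have h0 : v.valuation K (p 0) ≠ 0 := by simpa using h
    have h1 : v.valuation K (p 1) ≠ 0 := by simpa using h'
    rcases le_total (v.valuation K (p 0)) (v.valuation K (p 1)) with hle | hle
    · rw [max_eq_right hle, min_eq_right]
      exact neg_le_neg ((WithZero.log_le_log h0 h1).mpr hle)
    · rw [max_eq_left hle, min_eq_left]
      exact neg_le_neg ((WithZero.log_le_log h1 h0).mpr hle)

lemma aux_logDist {P Q : P1 K} (h : P ≠ Q) :
    logDist v P Q = ((- WithZero.log (auxW (v.valuation K) P Q) : ℤ) : WithTop ℤ) := by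
  have hp := auxN_ne (v.valuation K) P.rep_nonzero
  have hq := auxN_ne (v.valuation K) Q.rep_nonzero
  have hd : v.valuation K (auxDt P.rep Q.rep) ≠ 0 := by simpa using auxDt_ne h
  rw [logDist, if_neg h, aux_minOrd, aux_minOrd, aux_ordAt, auxW,
    WithZero.log_div hd (mul_ne_zero hp hq), WithZero.log_mul hp hq, auxDt]
  congr 1
  ring

lemma aux_logDist_le {P Q P' Q' : P1 K}
    (h : auxW (v.valuation K) P' Q' ≤ auxW (v.valuation K) P Q) :
    logDist v P Q ≤ logDist v P' Q' := by
  by_cases h' : P' = Q'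
  · simp [logDist, h']
  · have hne := auxW_ne (v.valuation K) h'
    have h1 : P ≠ Q := by
      rintro rfl
      rw [auxW_self, le_zero_iff] at h
      exact hne h
    rw [aux_logDist v h', aux_logDist v h1, WithTop.coe_le_coe]
    exact neg_le_neg ((WithZero.log_le_log hne (auxW_ne _ h1)).mpr h)

lemma aux_unit_eval {R L : Type*} [CommRing R] [IsLocalRing R] [Field L]
    [Algebra (IsLocalRing.ResidueField R) L]
    (F G : MvPolynomial (Fin 2) R)
    (H : ∀ x y : L,
      eval ![x, y] (MvPolynomial.map ((algebraMap (IsLocalRing.ResidueField R) L).comp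
        (IsLocalRing.residue R)) F) = 0 →
      eval ![x, y] (MvPolynomial.map ((algebraMap (IsLocalRing.ResidueField R) L).comp
        (IsLocalRing.residue R)) G) = 0 → x = 0 ∧ y = 0)
    (x y : R) (hxy : IsUnit x ∨ IsUnit y) :
    IsUnit (eval ![x, y] F) ∨ IsUnit (eval ![x, y] G) := by
  set f := (algebraMap (IsLocalRing.ResidueField R) L).comp (IsLocalRing.residue R) with hf
  have hu : ∀ z : R, f z = 0 ↔ ¬ IsUnit z := by
    intro z
    rw [hf, RingHom.comp_apply, map_eq_zero, IsLocalRing.residue_eq_zero_iff,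
      IsLocalRing.mem_maximalIdeal, mem_nonunits_iff]
  by_contra hcon
  rw [not_or, ← hu, ← hu, aux_map_eval, aux_map_eval] at hcon
  have := H _ _ hcon.1 hcon.2
  rw [hu, hu] at this
  tauto

lemma aux_nonexp {d : ℕ} (φ : P1Map K d) (hgr : GoodReductionAt φ v) (P Q : P1 K) :
    auxW (v.valuation K) (φ.toFun P) (φ.toFun Q) ≤ auxW (v.valuation K) P Q := by
  obtain ⟨c, hc, F₀, G₀, hF, hG, -, H⟩ := hgr
  have inj : Function.Injective ((v.valuation K).valuationSubring.subtype) :=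
    Subtype.val_injective
  have homF : F₀.IsHomogeneous d := by
    refine IsHomogeneous.of_map inj ?_
    rw [hF]; simpa using (isHomogeneous_C (Fin 2) c).mul φ.homF
  have homG : G₀.IsHomogeneous d := by
    refine IsHomogeneous.of_map inj ?_
    rw [hG]; simpa using (isHomogeneous_C (Fin 2) c).mul φ.homG
  have step : ∀ (x y : (v.valuation K).valuationSubring) (h : ![(x : K), (y : K)] ≠ 0),
      (IsUnit x ∨ IsUnit y) →
      ∃ h', φ.toFun (Projectivization.mk K ![(x : K), (y : K)] h) =
        Projectivization.mk K ![((eval ![x, y] F₀ : (v.valuation K).valuationSubring) : K),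
          ((eval ![x, y] G₀ : (v.valuation K).valuationSubring) : K)] h' := by
    intro x y h hu
    have hu' := aux_unit_eval F₀ G₀ H x y hu
    have eF : ((eval ![x, y] F₀ : (v.valuation K).valuationSubring) : K)
        = c * eval ![(x : K), (y : K)] φ.F := by
      have := aux_map_eval ((v.valuation K).valuationSubring.subtype) F₀ x y
      rw [hF] at this
      simpa using this
    have eG : ((eval ![x, y] G₀ : (v.valuation K).valuationSubring) : K)
        = c * eval ![(x : K), (y : K)] φ.G := by
      have := aux_map_eval ((v.valuation K).valuationSubring.subtype) G₀ x y
      rw [hG] at this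
      simpa using this
    have h' : ![((eval ![x, y] F₀ : (v.valuation K).valuationSubring) : K),
          ((eval ![x, y] G₀ : (v.valuation K).valuationSubring) : K)] ≠ 0 := by
      intro h0
      have h1 := auxN_unit (v.valuation K) hu'
      rw [h0] at h1
      simp [auxN] at h1
    have h'' : ![eval ![(x : K), (y : K)] φ.F, eval ![(x : K), (y : K)] φ.G] ≠ 0 := by
      intro h0
      apply h'
      have a0 := congrFun h0 0
      have a1 := congrFun h0 1
      simp only [Matrix.cons_val_zero, Matrix.cons_val_one, Pi.zero_apply] at a0 a1
      rw [eF, eG, a0, a1]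
      simp
    refine ⟨h', ?_⟩
    rw [φ.compat _ _ h h'', Projectivization.mk_eq_mk_iff']
    refine ⟨c⁻¹, ?_⟩
    rw [eF, eG]
    simp [hc]
  obtain ⟨p0, p1, hp, rfl, up⟩ := aux_exists_norm (v.valuation K) P
  obtain ⟨q0, q1, hq, rfl, uq⟩ := aux_exists_norm (v.valuation K) Q
  obtain ⟨hp', ep⟩ := step p0 p1 hp up
  obtain ⟨hq', eq⟩ := step q0 q1 hq uq
  rw [ep, eq, auxW_mk, auxW_mk, auxN_unit _ up, auxN_unit _ uq,
    auxN_unit _ (aux_unit_eval F₀ G₀ H _ _ up), auxN_unit _ (aux_unit_eval F₀ G₀ H _ _ uq)]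
  simp only [mul_one, div_one]
  obtain ⟨r, hr⟩ := aux_core homF homG p0 p1 q0 q1 up
  have hr' := congrArg (fun z : (v.valuation K).valuationSubring => (z : K)) hr
  simp only [auxDt, Matrix.cons_val_zero, Matrix.cons_val_one]
  push_cast at hr'
  rw [hr', map_mul]
  exact mul_le_of_le_one_right' r.2

lemma aux_nonexp_iter {d : ℕ} (φ : P1Map K d) (hgr : GoodReductionAt φ v) (n : ℕ) (P Q : P1 K) :
    auxW (v.valuation K) (φ.toFun^[n] P) (φ.toFun^[n] Q) ≤ auxW (v.valuation K) P Q := by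
  induction n with
  | zero => exact le_rfl
  | succ k ih =>
    rw [Function.iterate_succ_apply', Function.iterate_succ_apply']
    exact (aux_nonexp v φ hgr _ _).trans ih

lemma aux_chain {d : ℕ} (φ : P1Map K d) (hgr : GoodReductionAt φ v) (n N : ℕ) (P : P1 K) :
    auxW (v.valuation K) P (φ.toFun^[n * N] P) ≤ auxW (v.valuation K) P (φ.toFun^[n] P) := by
  induction N with
  | zero => simp [auxW_self]
  | succ k ih =>
    refine (auxW_ultra _ _ (φ.toFun^[n * k] P) _).trans (max_le ih ?_)
    rw [Nat.mul_succ, Function.iterate_add_apply]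
    exact aux_nonexp_iter v φ hgr _ _ _

end

/-- **Lemma (Canci–Paladino).** Let `φ` have good reduction at `𝔭`, let `P₀` be a fixed point
of `φ`, and let `0 < a < b` with `φ^b(P_b) = φ^a(P_a) = P₀` and `φ^{b-a}(P_b) = P_a`. Then
`δ_𝔭(P_b,P_a) = δ_𝔭(P_b,P₀) ≤ δ_𝔭(P_a,P₀)`. -/
theorem logDist_eq_and_le_of_preimages_of_fixed_point
    {K : Type*} [Field K] [NumberField K]
    {d : ℕ} (φ : P1Map K d) (v : HeightOneSpectrum (𝓞 K))
    (hgr : GoodReductionAt φ v)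
    (P₀ : P1 K) (hfix : φ.toFun P₀ = P₀)
    (a b : ℕ) (ha : 0 < a) (hab : a < b)
    (Pb Pa : P1 K) (hPb : φ.toFun^[b] Pb = P₀) (hPa : φ.toFun^[a] Pa = P₀)
    (hba : φ.toFun^[b - a] Pb = Pa) :
    logDist v Pb Pa = logDist v Pb P₀ ∧ logDist v Pb P₀ ≤ logDist v Pa P₀ := by
  have hfixn : ∀ n, φ.toFun^[n] P₀ = P₀ := fun n => Function.iterate_fixed hfix n
  have h1 : auxW (v.valuation K) Pa P₀ ≤ auxW (v.valuation K) Pb P₀ := by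
    have := aux_nonexp_iter v φ hgr (b - a) Pb P₀
    rwa [hba, hfixn] at this
  have h2 : auxW (v.valuation K) Pb Pa ≤ auxW (v.valuation K) Pb P₀ := by
    refine (auxW_ultra _ Pb P₀ Pa).trans (max_le le_rfl ?_)
    rwa [auxW_comm]
  have h3 : auxW (v.valuation K) Pb P₀ ≤ auxW (v.valuation K) Pb Pa := by
    have := aux_chain v φ hgr (b - a) b Pb
    obtain ⟨m, hm⟩ : ∃ m, (b - a) * b = m + b := by
      refine ⟨(b - a) * b - b, (Nat.sub_add_cancel ?_).symm⟩
      exact Nat.le_mul_of_pos_left b (by omega)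
    rwa [hm, Function.iterate_add_apply, hPb, hfixn, hba] at this
  exact ⟨le_antisymm (aux_logDist_le v h3) (aux_logDist_le v h2), aux_logDist_le v h1⟩
end

section
/- Let φ be an endomorphism of ℙ¹ defined over a number field K with good reduction outside a finite set of places S containing all archimedean ones. Let R ∈ ℙ¹(K) be a tail point of φ and let n be the period of the periodic part of the orbit of R. Let P ∈ ℙ¹(K) be any periodic point of φ such that P ≠ φ^{mn}(R) for every m ≥ 0. Then δ_𝔭(P, R) = 0 for every prime 𝔭 ∉ S. -/
open NumberField IsDedekindDomain MvPolynomial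
open scoped Classical nonZeroDivisors

set_option synthInstance.maxHeartbeats 1000000
set_option maxHeartbeats 1000000

section Helpers

/-- key algebraic fact: `f - X g` vanishes at `p` and `q`. -/
theorem key_alg {A : Type*} [CommRing A] [IsDomain A] (f g : Polynomial A) (p q r : A)
    (hp : f.eval p = p * g.eval p) (hq : f.eval q = q * g.eval q)
    (hr : f.eval r = q * g.eval r) (hu : IsUnit (g.eval r)) (hpq : p ≠ q) (hrq : r ≠ q) :
    IsUnit (r - p) := by
  have h1 : (f - Polynomial.X * g).IsRoot p := by simp [Polynomial.IsRoot, hp]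
  obtain ⟨h, hh⟩ := Polynomial.dvd_iff_isRoot.mpr h1
  have h2 : h.IsRoot q := by
    have := congrArg (Polynomial.eval q) hh
    simp [hq] at this
    rcases this with h | h
    · exact absurd (sub_eq_zero.mp h).symm hpq
    · exact h
  obtain ⟨k, hk⟩ := Polynomial.dvd_iff_isRoot.mpr h2
  have h3 := congrArg (Polynomial.eval r) hh
  rw [hk] at h3
  simp [hr] at h3
  have h4 : g.eval r = (r - p) * (- k.eval r) := by
    apply mul_left_cancel₀ (sub_ne_zero.mpr hrq)
    linear_combination -h3
  rw [h4] at hu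
  exact isUnit_of_mul_isUnit_left hu

theorem key_local {A : Type*} [CommRing A] [IsDomain A] [IsLocalRing A] (f g : Polynomial A)
    (p r : A) (hp : f.eval p = p * g.eval p) (hpu : IsUnit (f.eval p) ∨ IsUnit (g.eval p))
    (hq : ∀ q, f.eval r = q * g.eval r → IsUnit (g.eval r) →
      f.eval q = q * g.eval q ∧ p ≠ q ∧ r ≠ q) :
    IsUnit (r - p) := by
  by_contra hn
  have hgp : IsUnit (g.eval p) := by
    rcases hpu with h | h
    · rw [hp] at h; exact isUnit_of_mul_isUnit_right h
    · exact h
  have hgr : IsUnit (g.eval r) := by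
    by_contra hgr
    obtain ⟨s, hs⟩ := Polynomial.sub_dvd_eval_sub r p g
    have h1 : g.eval r - g.eval p ∈ IsLocalRing.maximalIdeal A := by
      rw [hs]
      exact Ideal.mul_mem_right _ _ ((IsLocalRing.mem_maximalIdeal _).mpr hn)
    have h2 := Ideal.sub_mem _ ((IsLocalRing.mem_maximalIdeal (g.eval r)).mpr hgr) h1
    rw [sub_sub_cancel] at h2
    exact (IsLocalRing.mem_maximalIdeal _).mp h2 hgp
  obtain ⟨w, hw⟩ := hgr
  have hfr : f.eval r = (f.eval r * ↑w⁻¹) * g.eval r := by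
    rw [← hw, mul_assoc, Units.inv_mul, mul_one]
  obtain ⟨h1, h2, h3⟩ := hq _ hfr ⟨w, hw⟩
  exact hn (key_alg f g p _ r hp h1 hfr ⟨w, hw⟩ h2 h3)

theorem mk_eq_cross {K : Type*} [Field K] {a b c e : K} (h1 : ![a, b] ≠ 0) (h2 : ![c, e] ≠ 0) :
    Projectivization.mk K ![a, b] h1 = Projectivization.mk K ![c, e] h2 ↔ a * e = b * c := by
  rw [Projectivization.mk_eq_mk_iff']
  constructor
  · rintro ⟨t, ht⟩
    have h0 := congrFun ht 0
    have h1 := congrFun ht 1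
    simp at h0 h1
    rw [← h0, ← h1]; ring
  · intro h
    by_cases hc : c = 0
    · have he : e ≠ 0 := by
        rintro rfl; apply h2; subst hc; ext i; fin_cases i <;> rfl
      refine ⟨b / e, ?_⟩
      subst hc
      have : a = 0 := by simpa [he] using h
      subst this
      ext i; fin_cases i
      · simp
      · simp [he]
    · refine ⟨a / c, ?_⟩
      ext i; fin_cases i
      · simp [hc]
      · simp; field_simp; linear_combination h

variable {K : Type*} [Field K] [NumberField K]

/-- `(x, y)` are primitive integral coordinates of `Q`. -/
def PrimRep (v : HeightOneSpectrum (𝓞 K)) (x y : (v.valuation (K := K)).valuationSubring)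
    (Q : P1 K) : Prop :=
  (IsUnit x ∨ IsUnit y) ∧ ∃ h, Q = Projectivization.mk K ![(x : K), (y : K)] h

theorem vec_ne (v : HeightOneSpectrum (𝓞 K)) (x y : (v.valuation (K := K)).valuationSubring)
    (h : IsUnit x ∨ IsUnit y) : ![(x : K), (y : K)] ≠ 0 := by
  intro h0
  have e0 := congrFun h0 0
  have e1 := congrFun h0 1
  simp at e0 e1
  subst e0 e1
  simp at h

theorem PrimRep.step {d : ℕ} (φ : P1Map K d) (v : HeightOneSpectrum (𝓞 K))
    (hg : GoodReductionAt φ v) :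
    ∃ F₀ G₀ : MvPolynomial (Fin 2) (v.valuation (K := K)).valuationSubring,
      ∀ x y Q, PrimRep v x y Q → PrimRep v (eval ![x, y] F₀) (eval ![x, y] G₀) (φ.toFun Q) := by
  obtain ⟨c, hc, F₀, G₀, hF, hG, -, hred⟩ := hg
  refine ⟨F₀, G₀, ?_⟩
  rintro x y Q ⟨hu, hne, rfl⟩
  have hprim : IsUnit (eval ![x, y] F₀) ∨ IsUnit (eval ![x, y] G₀) := by
    by_contra hcon
    push Not at hcon
    set ρ := (algebraMap (IsLocalRing.ResidueField (v.valuation (K := K)).valuationSubring)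
              (AlgebraicClosure
                (IsLocalRing.ResidueField (v.valuation (K := K)).valuationSubring))).comp
            (IsLocalRing.residue (v.valuation (K := K)).valuationSubring) with hρ
    have hz : ∀ z, ρ z = 0 ↔ ¬ IsUnit z := by
      intro z
      rw [hρ, RingHom.comp_apply, map_eq_zero,
        IsLocalRing.residue_eq_zero_iff, IsLocalRing.mem_maximalIdeal]
      rfl
    have hev : ∀ H : MvPolynomial (Fin 2) (v.valuation (K := K)).valuationSubring,
        eval ![ρ x, ρ y] (MvPolynomial.map ρ H) = ρ (eval ![x, y] H) := by
      intro H
      have : ![ρ x, ρ y] = ρ ∘ ![x, y] := by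
        ext i; fin_cases i <;> rfl
      rw [eval_map, this, ← MvPolynomial.eval₂_comp]
    have := hred (ρ x) (ρ y) (by rw [hev, hz]; exact hcon.1) (by rw [hev, hz]; exact hcon.2)
    rw [hz, hz] at this
    tauto
  refine ⟨hprim, vec_ne v _ _ hprim, ?_⟩
  have hev : ∀ (H : MvPolynomial (Fin 2) (v.valuation (K := K)).valuationSubring)
      (H' : MvPolynomial (Fin 2) K),
      MvPolynomial.map ((v.valuation (K := K)).valuationSubring.subtype) H = C c * H' →
      ((eval ![x, y] H : (v.valuation (K := K)).valuationSubring) : K)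
        = c * eval ![(x : K), (y : K)] H' := by
    intro H H' h
    have h2 := congrArg (eval ![(x : K), (y : K)]) h
    have : ![(x : K), (y : K)] = (v.valuation (K := K)).valuationSubring.subtype ∘ ![x, y] := by
      ext i; fin_cases i <;> rfl
    rw [map_mul, eval_C] at h2
    rw [← h2, eval_map, this, ← MvPolynomial.eval₂_comp]
    rfl
  have h1 := hev _ _ hF
  have h2 := hev _ _ hG
  have hne' : ![eval ![(x : K), (y : K)] φ.F, eval ![(x : K), (y : K)] φ.G] ≠ 0 := by
    intro h0
    have e0 := congrFun h0 0
    have e1 := congrFun h0 1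
    simp at e0 e1
    rw [e0] at h1
    rw [e1] at h2
    apply vec_ne v _ _ hprim
    rw [h1, h2]
    ext i; fin_cases i <;> simp
  rw [φ.compat _ _ hne hne', mk_eq_cross, h1, h2]
  ring

theorem PrimRep.iter {d : ℕ} (φ : P1Map K d) (v : HeightOneSpectrum (𝓞 K))
    (hg : GoodReductionAt φ v) (N : ℕ) :
    ∃ F₀ G₀ : MvPolynomial (Fin 2) (v.valuation (K := K)).valuationSubring,
      ∀ x y Q, PrimRep v x y Q → PrimRep v (eval ![x, y] F₀) (eval ![x, y] G₀) (φ.toFun^[N] Q) := by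
  induction N with
  | zero => exact ⟨X 0, X 1, fun x y Q h => by simpa using h⟩
  | succ N ih =>
    obtain ⟨F, G, h⟩ := ih
    obtain ⟨F₀, G₀, h₀⟩ := PrimRep.step φ v hg
    refine ⟨bind₁ ![F, G] F₀, bind₁ ![F, G] G₀, fun x y Q hQ => ?_⟩
    rw [Function.iterate_succ_apply']
    have hev : ∀ H, eval ![x, y] (bind₁ ![F, G] H) = eval ![eval ![x, y] F, eval ![x, y] G] H := by
      intro H
      rw [← MvPolynomial.coe_aeval_eq_eval, RingHom.coe_coe, aeval_bind₁, 
        ← MvPolynomial.coe_aeval_eq_eval, RingHom.coe_coe]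
      congr 2
      ext i; fin_cases i <;> simp
    rw [hev, hev]
    exact h₀ _ _ _ (h _ _ _ hQ)

theorem PrimRep.exists (v : HeightOneSpectrum (𝓞 K)) (Q : P1 K) :
    (∃ z, PrimRep v z 1 Q) ∨ (∃ z, PrimRep v 1 z Q) := by
  induction Q using Projectivization.ind with
  | h w hw =>
  have hw2 : w = ![w 0, w 1] := by ext i; fin_cases i <;> rfl
  generalize w 0 = a at hw2
  generalize w 1 = b at hw2
  subst hw2
  by_cases hb : b = 0
  · right
    refine ⟨0, Or.inl isUnit_one, vec_ne v _ _ (Or.inl isUnit_one), ?_⟩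
    rw [mk_eq_cross]; simp [hb]
  by_cases ha : a = 0
  · left
    refine ⟨0, Or.inr isUnit_one, vec_ne v _ _ (Or.inr isUnit_one), ?_⟩
    rw [mk_eq_cross]; simp [ha]
  rcases (v.valuation (K := K)).valuationSubring.mem_or_inv_mem (a / b) with h | h
  · left
    refine ⟨⟨_, h⟩, Or.inr isUnit_one, vec_ne v _ _ (Or.inr isUnit_one), ?_⟩
    rw [mk_eq_cross]; simp; field_simp
  · right
    refine ⟨⟨_, h⟩, Or.inl isUnit_one, vec_ne v _ _ (Or.inl isUnit_one), ?_⟩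
    rw [mk_eq_cross]; simp; field_simp

theorem PrimRep.cross {v : HeightOneSpectrum (𝓞 K)} {x y x' y' Q Q'} (h : PrimRep v x y Q)
    (h' : PrimRep v x' y' Q') : Q = Q' ↔ x * y' = y * x' := by
  obtain ⟨-, h1, rfl⟩ := h
  obtain ⟨-, h2, rfl⟩ := h'
  rw [mk_eq_cross, ← Subtype.coe_inj]
  rfl

theorem ordAt_mul (v : HeightOneSpectrum (𝓞 K)) {x y : K} (hx : x ≠ 0) (hy : y ≠ 0) :
    ordAt v (x * y) = ordAt v x + ordAt v y := by
  rw [ordAt, ordAt, ordAt, dif_neg hx, dif_neg hy, dif_neg (mul_ne_zero hx hy), ← neg_add,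
    ← toAdd_mul]
  congr 2
  apply WithZero.coe_injective
  simp

theorem ordAt_nonneg (v : HeightOneSpectrum (𝓞 K))
    (x : (v.valuation (K := K)).valuationSubring) : 0 ≤ ordAt v (x : K) := by
  rw [ordAt]
  split_ifs with h
  · rfl
  · have : v.valuation K (x : K) ≤ 1 := x.2
    rw [neg_nonneg, ← toAdd_one, Multiplicative.toAdd_le, ← WithZero.coe_le_coe]
    simpa using this

theorem ordAt_unit (v : HeightOneSpectrum (𝓞 K))
    (x : (v.valuation (K := K)).valuationSubring) (hx : IsUnit x) : ordAt v (x : K) = 0 := by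
  obtain ⟨y, hy⟩ := hx.exists_right_inv
  have hxy : (x : K) * y = 1 := by exact_mod_cast congrArg Subtype.val hy
  have hx0 : (x : K) ≠ 0 := left_ne_zero_of_mul_eq_one hxy
  have hy0 : (y : K) ≠ 0 := right_ne_zero_of_mul_eq_one hxy
  have h1 := ordAt_mul v hx0 hy0
  have h2 := ordAt_mul v (one_ne_zero (α := K)) one_ne_zero
  rw [hxy] at h1
  rw [one_mul] at h2
  have := ordAt_nonneg v x
  have := ordAt_nonneg v y
  omega

theorem minOrd_scale (v : HeightOneSpectrum (𝓞 K)) {t : K} (ht : t ≠ 0)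
    (x y : (v.valuation (K := K)).valuationSubring) (h : IsUnit x ∨ IsUnit y) :
    minOrd v (t * x) (t * y) = ordAt v t := by
  have hx := ordAt_nonneg v x
  have hy := ordAt_nonneg v y
  have hne := vec_ne v x y h
  have h' : ordAt v (x : K) = 0 ∨ ordAt v (y : K) = 0 :=
    h.imp (ordAt_unit v x) (ordAt_unit v y)
  rw [minOrd]
  simp only [mul_eq_zero, ht, false_or]
  split_ifs with h1 h2
  · have hyu : IsUnit y := by
      rcases h with h | h
      · have : x = 0 := Subtype.ext h1
        rw [this] at h
        simp at h
      · exact h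
    have h2 : (y : K) ≠ 0 := by
      intro h2; apply hne; rw [h1, h2]; ext i; fin_cases i <;> rfl
    rw [ordAt_mul v ht h2, ordAt_unit v y hyu, add_zero]
  · have hxu : IsUnit x := by
      rcases h with h | h
      · exact h
      · have : y = 0 := Subtype.ext h2
        rw [this] at h
        simp at h
    rw [ordAt_mul v ht h1, ordAt_unit v x hxu, add_zero]
  · rw [ordAt_mul v ht h1, ordAt_mul v ht h2]
    omega

theorem PrimRep.rep {v : HeightOneSpectrum (𝓞 K)} {x y Q} (h : PrimRep v x y Q) :
    ∃ t : K, t ≠ 0 ∧ Q.rep 0 = t * x ∧ Q.rep 1 = t * y := by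
  obtain ⟨-, h1, rfl⟩ := h
  obtain ⟨t, ht⟩ := Projectivization.exists_smul_eq_mk_rep K _ h1
  refine ⟨t, t.ne_zero, ?_, ?_⟩
  · rw [← ht]; rfl
  · rw [← ht]; rfl

theorem PrimRep.logDist {v : HeightOneSpectrum (𝓞 K)} {x y x' y' Q Q'} (h : PrimRep v x y Q)
    (h' : PrimRep v x' y' Q') (hu : IsUnit (x * y' - y * x')) : logDist v Q Q' = 0 := by
  have hne : Q ≠ Q' := by
    rw [ne_eq, h.cross h', ← sub_eq_zero]
    exact hu.ne_zero
  obtain ⟨t, ht, e0, e1⟩ := h.rep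
  obtain ⟨s, hs, e0', e1'⟩ := h'.rep
  have hd : ((x * y' - y * x' : (v.valuation (K := K)).valuationSubring) : K) ≠ 0 := by
    intro h0
    exact hu.ne_zero (Subtype.ext h0)
  have hh : t * x * (s * y') - t * y * (s * x')
      = t * s * ((x * y' - y * x' : (v.valuation (K := K)).valuationSubring) : K) := by
    push_cast; ring
  rw [_root_.logDist, if_neg hne, e0, e1, e0', e1', minOrd_scale v ht _ _ h.1,
    minOrd_scale v hs _ _ h'.1, hh, ordAt_mul v (mul_ne_zero ht hs) hd, ordAt_mul v ht hs,
    ordAt_unit v _ hu]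
  simp

/-- The dynamical core: `P`, `Q = ψ(R)` fixed by `ψ`, `P ≠ Q ≠ R`. -/
theorem core {d : ℕ} (φ : P1Map K d) (v : HeightOneSpectrum (𝓞 K))
    (hg : GoodReductionAt φ v) (N : ℕ) (P Q R : P1 K) (hP : φ.toFun^[N] P = P)
    (hQ : φ.toFun^[N] Q = Q) (hR : φ.toFun^[N] R = Q) (hPQ : P ≠ Q) (hRQ : R ≠ Q) :
    _root_.logDist v P R = 0 := by
  obtain ⟨F, G, h⟩ := PrimRep.iter φ v hg N
  have mk : ∀ (w : Fin 2 → Polynomial (v.valuation (K := K)).valuationSubring) H z,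
      (aeval w H : Polynomial _).eval z = eval (fun i => (w i).eval z) H := by
    intro w H z
    rw [← Polynomial.coe_aeval_eq_eval, MvPolynomial.comp_aeval_apply,
      ← MvPolynomial.coe_aeval_eq_eval, RingHom.coe_coe]
  rcases PrimRep.exists v P with ⟨p, hp⟩ | ⟨p, hp⟩
  · have main : ∀ r, PrimRep v r 1 R → IsUnit (r - p) := by
      intro r hr
      have e : ∀ (H : MvPolynomial (Fin 2) (v.valuation (K := K)).valuationSubring)
          (z : (v.valuation (K := K)).valuationSubring),
          (aeval ![Polynomial.X, 1] H : Polynomial _).eval z = eval ![z, 1] H := by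
        intro H z
        rw [mk]; congr 1; congr 1; ext i; fin_cases i <;> simp
      have hPP := h _ _ _ hp
      have hRR := h _ _ _ hr
      rw [hP] at hPP
      rw [hR] at hRR
      apply key_local (aeval ![Polynomial.X, 1] F) (aeval ![Polynomial.X, 1] G)
      · rw [e, e]
        have := (hPP.cross hp).1 rfl
        rw [mul_one] at this
        rw [this, mul_comm]
      · rw [e, e]; exact hPP.1
      · intro q hq1 hq2
        rw [e, e] at *
        have hq : PrimRep v q 1 Q := by
          refine ⟨Or.inr isUnit_one, vec_ne v _ _ (Or.inr isUnit_one), ?_⟩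
          obtain ⟨-, h1, rfl⟩ := hRR
          rw [mk_eq_cross]
          rw [hq1]; push_cast; ring
        have hQQ := h _ _ _ hq
        rw [hQ] at hQQ
        refine ⟨?_, ?_, ?_⟩
        · have := (hQQ.cross hq).1 rfl
          rw [mul_one] at this
          rw [this, mul_comm]
        · rintro rfl; exact hPQ ((hp.cross hq).2 (by ring))
        · rintro rfl; exact hRQ ((hr.cross hq).2 (by ring))
    rcases PrimRep.exists v R with ⟨r, hr⟩ | ⟨r, hr⟩
    · apply hp.logDist hr
      have := (main r hr).neg
      convert this using 1; ring
    · by_cases hru : IsUnit r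
      · obtain ⟨u, rfl⟩ := hru
        have hr' : PrimRep v (↑u⁻¹) 1 R := by
          refine ⟨Or.inr isUnit_one, vec_ne v _ _ (Or.inr isUnit_one), ?_⟩
          obtain ⟨-, h1, rfl⟩ := hr
          rw [mk_eq_cross]
          have h2 := congrArg Subtype.val (u.mul_inv)
          push_cast at h2 ⊢
          rw [h2, mul_one]
        apply hp.logDist hr
        have := ((main _ hr').mul u.isUnit).neg
        convert this using 1
        rw [sub_mul, Units.inv_mul]; ring
      · apply hp.logDist hr
        by_contra hcon
        have h1 := Ideal.sub_mem _ (Ideal.mul_mem_left _ p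
          ((IsLocalRing.mem_maximalIdeal _).mpr hru)) ((IsLocalRing.mem_maximalIdeal _).mpr hcon)
        rw [show p * r - (p * r - 1 * 1) = 1 by ring] at h1
        exact (IsLocalRing.mem_maximalIdeal _).mp h1 isUnit_one
  · have main : ∀ r, PrimRep v 1 r R → IsUnit (r - p) := by
      intro r hr
      have e : ∀ (H : MvPolynomial (Fin 2) (v.valuation (K := K)).valuationSubring)
          (z : (v.valuation (K := K)).valuationSubring),
          (aeval ![1, Polynomial.X] H : Polynomial _).eval z = eval ![1, z] H := by
        intro H z
        rw [mk]; congr 1; congr 1; ext i; fin_cases i <;> simp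
      have hPP := h _ _ _ hp
      have hRR := h _ _ _ hr
      rw [hP] at hPP
      rw [hR] at hRR
      apply key_local (aeval ![1, Polynomial.X] G) (aeval ![1, Polynomial.X] F)
      · rw [e, e]
        have := (hPP.cross hp).1 rfl
        rw [mul_one] at this
        rw [← this, mul_comm]
      · rw [e, e]; exact hPP.1.symm
      · intro q hq1 hq2
        rw [e, e] at *
        have hq : PrimRep v 1 q Q := by
          refine ⟨Or.inl isUnit_one, vec_ne v _ _ (Or.inl isUnit_one), ?_⟩
          obtain ⟨-, h1, rfl⟩ := hRR
          rw [mk_eq_cross]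
          rw [hq1]; push_cast; ring
        have hQQ := h _ _ _ hq
        rw [hQ] at hQQ
        refine ⟨?_, ?_, ?_⟩
        · have := (hQQ.cross hq).1 rfl
          rw [mul_one] at this
          rw [← this, mul_comm]
        · rintro rfl; exact hPQ ((hp.cross hq).2 (by ring))
        · rintro rfl; exact hRQ ((hr.cross hq).2 (by ring))
    rcases PrimRep.exists v R with ⟨r, hr⟩ | ⟨r, hr⟩
    · by_cases hru : IsUnit r
      · obtain ⟨u, rfl⟩ := hru
        have hr' : PrimRep v 1 (↑u⁻¹) R := by
          refine ⟨Or.inl isUnit_one, vec_ne v _ _ (Or.inl isUnit_one), ?_⟩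
          obtain ⟨-, h1, rfl⟩ := hr
          rw [mk_eq_cross]
          have h2 := congrArg Subtype.val (u.mul_inv)
          push_cast at h2 ⊢
          rw [h2, mul_one]
        apply hp.logDist hr
        have := ((main _ hr').mul u.isUnit)
        convert this using 1
        rw [sub_mul, Units.inv_mul]; ring
      · apply hp.logDist hr
        by_contra hcon
        have h1 := Ideal.add_mem _ (Ideal.mul_mem_left _ p
          ((IsLocalRing.mem_maximalIdeal _).mpr hru)) ((IsLocalRing.mem_maximalIdeal _).mpr hcon)
        rw [show p * r + (1 * 1 - p * r) = 1 by ring] at h1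
        exact (IsLocalRing.mem_maximalIdeal _).mp h1 isUnit_one
    · apply hp.logDist hr
      have := (main r hr)
      convert this using 1; ring

end Helpers

/-- **Proposition (tail points are coprime to periodic points).** Let `R` be a `K`-rational
tail point of `φ` and `n` the period of the periodic part of the orbit of `R`. If `P` is any
`K`-rational periodic point which is not of the form `φ^{mn}(R)`, then `δ_𝔭(P,R) = 0` for
all `𝔭 ∉ S`. -/
theorem logDist_periodic_tail_eq_zero
    {K : Type*} [Field K] [NumberField K]
    (T : Finset (HeightOneSpectrum (𝓞 K))) {d : ℕ}
    (φ : P1Map K d) (hgr : GoodReductionOutside φ T)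
    (R : P1 K) (hR : IsTailPoint φ R)
    (m : ℕ) (hm : IsPeriodicPoint φ (φ.toFun^[m] R))
    (n : ℕ) (hn : n = Function.minimalPeriod φ.toFun (φ.toFun^[m] R))
    (P : P1 K) (hP : IsPeriodicPoint φ P)
    (hPR : ∀ k : ℕ, φ.toFun^[k * n] R ≠ P) :
    ∀ v ∉ T, logDist v P R = 0 := by
  intro v hv
  obtain ⟨p, hp0, hp⟩ := hP
  obtain ⟨l, hl0, hl⟩ := hm
  have hn0 : 0 < n := by
    rw [hn]; exact Function.IsPeriodicPt.minimalPeriod_pos hl0 hl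
  have hnper : Function.IsPeriodicPt φ.toFun n (φ.toFun^[m] R) := by
    rw [hn]; exact Function.isPeriodicPt_minimalPeriod _ _
  obtain ⟨N, hN⟩ : ∃ N, N = ((m + 1) * p) * n := ⟨_, rfl⟩
  have hmN : m ≤ N := by
    rw [hN]
    have : m + 1 ≤ (m + 1) * p := Nat.le_mul_of_pos_right _ hp0
    have := Nat.le_mul_of_pos_right ((m + 1) * p) hn0
    omega
  have hPN : Function.IsPeriodicPt φ.toFun N P := by
    rw [hN, show (m + 1) * p * n = p * ((m + 1) * n) by ring]
    exact Function.IsPeriodicPt.mul_const hp _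
  have hQN : Function.IsPeriodicPt φ.toFun N (φ.toFun^[N] R) := by
    have h1 : Function.IsPeriodicPt φ.toFun N (φ.toFun^[m] R) := by
      rw [hN]; exact Function.IsPeriodicPt.const_mul hnper _
    have h2 := h1.apply_iterate (N - m)
    rwa [← Function.iterate_add_apply, Nat.sub_add_cancel hmN] at h2
  have hN0 : 0 < N := by rw [hN]; positivity
  refine core φ v (hgr v hv) N P (φ.toFun^[N] R) R hPN hQN rfl ?_ ?_
  · rw [hN]; exact (hPR _).symm
  · intro h
    exact hR.2 ⟨N, hN0, h.symm⟩
end
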